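/- arXiv:2512.21162 — 2 statements merged into one kernel-verified Lean document; each statement's English description precedes it below -/
import Mathlib

section
/- Let 2 ≤ s < ∞, let A be a symmetric positive definite real n×n matrix, and define H(ξ) := (|ξ|_s^p + |ξ|_A^p)^{1/p}. Then H is a norm on ℝⁿ, and there exists a constant C > 0 such that for all ξ, η ∈ ℝⁿ with (ξ,η) ≠ (0,0): H(ξ+η)^p − H(ξ)^p − p·|ξ|_s^{p−s}·∑_{i=1}^n |ξᵢ|^{s−2} ξᵢ ηᵢ − p·|ξ|_A^{p−2}·⟪Aξ, η⟫ ≤ C·H(η)²·(H(ξ) + H(η))^{p−2}, where the two subtracted gradient terms are interpreted as 0 when ξ = 0. -/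
open scoped Classical

open Matrix

/-!
For a seminorm `N` and candidate gradient terms, call an estimate
`N (ξ + η) ^ q ≤ N ξ ^ q + q * L ξ η + C * N η ^ 2 * (N ξ + N η) ^ (q - 2)` an upper Bregman bound
of order `q`. Such a bound passes from any order `q` to any order `p ≥ 1`: if `N η ≥ N ξ`, all the
terms of order `p` are at most a multiple of the error; if `N η < N ξ`, normalise `N ξ = 1`, use
`1 + u ≤ exp u`, raise to the power `p / q`, and expand with `exp v ≤ 1 + v + v ^ 2 * exp |v|`.

A Hilbertian seminorm satisfies the bound of order `2` with equality, hence the bound of every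
order. Applied to the coordinates at order `s` and summed, this gives `|·|_s` at order `s`, since
for `s ≥ 2` the error increases with the gauge; then `|·|_s` has the bound at order `p`, and so does
`|·|_A`. In their `ℓᵖ`-sum `H` both gauges may be replaced by `H`, because they are comparable to it
in finite dimension.
-/

section RealInequalities

lemma rpow_le_rpow_abs_mul_rpow {x y D : ℝ} (hx : 0 < x) (hy : 0 < y) (hxy : x ≤ D * y)
    (hyx : y ≤ D * x) (r : ℝ) : x ^ r ≤ D ^ |r| * y ^ r := by
  have hD : 0 < D := pos_of_mul_pos_left (hx.trans_le hxy) hy.le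
  rcases le_total 0 r with hr | hr
  · rw [abs_of_nonneg hr, ← Real.mul_rpow hD.le hy.le]
    exact Real.rpow_le_rpow hx.le hxy hr
  · rw [abs_of_nonpos hr, Real.rpow_neg hD.le, ← div_eq_inv_mul, le_div_iff₀' (by positivity),
      ← Real.mul_rpow hD.le hx.le]
    exact Real.rpow_le_rpow_of_nonpos hy hyx hr

lemma sq_mul_add_rpow_le_of_comparable {a t a' t' D : ℝ} (ha : 0 ≤ a) (ht : 0 ≤ t) (haa' : a ≤ a')
    (htt' : t ≤ t') (ha'D : a' ≤ D * a) (ht'D : t' ≤ D * t) (r : ℝ) :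
    t ^ 2 * (a + t) ^ r ≤ D ^ |r| * (t' ^ 2 * (a' + t') ^ r) := by
  rcases ht.eq_or_lt with rfl | ht
  · obtain rfl : t' = 0 := le_antisymm (by simpa using ht'D) htt'
    simp
  have hD : 1 ≤ D := (le_mul_iff_one_le_left ht).1 (htt'.trans ht'D)
  have hsum : (a + t) ^ r ≤ D ^ |r| * (a' + t') ^ r :=
    rpow_le_rpow_abs_mul_rpow (by linarith) (by linarith) (by nlinarith) (by linarith) r
  calc t ^ 2 * (a + t) ^ r ≤ t' ^ 2 * (D ^ |r| * (a' + t') ^ r) := by gcongr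
    _ = D ^ |r| * (t' ^ 2 * (a' + t') ^ r) := by ring

lemma rpow_eq_sq_mul_rpow_sub_two {x p : ℝ} (hx : 0 ≤ x) (hp : p ≠ 0) :
    x ^ p = x ^ 2 * x ^ (p - 2) := by
  rw [← Real.rpow_natCast, ← Real.rpow_add' hx (by simpa using hp)]
  norm_num

lemma exp_le_one_add_add_sq_mul_exp_abs (v : ℝ) :
    Real.exp v ≤ 1 + v + v ^ 2 * Real.exp |v| := by
  have h := Complex.norm_exp_sub_sum_le_norm_mul_exp v 2
  simp only [Finset.sum_range_succ, Finset.sum_range_zero] at h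
  norm_num at h
  norm_cast at h
  simp only [Real.norm_eq_abs] at h
  linarith [le_abs_self (Real.exp v - (1 + v))]

lemma exists_rpow_le_one_add {p q B K : ℝ} (hp : 0 ≤ p) (hq : 0 < q) (hB : 0 ≤ B) (hK : 0 ≤ K) :
    ∃ C, 0 ≤ C ∧ ∀ z l x : ℝ, 0 ≤ z → 0 ≤ x → x ≤ 1 → |l| ≤ B * x →
      z ^ q ≤ 1 + q * l + K * x ^ 2 → z ^ p ≤ 1 + p * l + C * x ^ 2 := by
  set E := p * B + p / q * K with hE
  refine ⟨p / q * K + E ^ 2 * Real.exp E, by positivity, fun z l x hz hx hx1 hl hzq => ?_⟩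
  set v := p * l + p / q * K * x ^ 2 with hv
  have hvE : |v| ≤ E * x := calc
    |v| ≤ p * |l| + p / q * K * x ^ 2 := by
      refine (abs_add_le _ _).trans_eq ?_
      rw [abs_mul, abs_of_nonneg hp, abs_of_nonneg (by positivity : 0 ≤ p / q * K * x ^ 2)]
    _ ≤ p * (B * x) + p / q * K * (x * 1) := by rw [sq]; gcongr
    _ = E * x := by rw [hE]; ring
  have hvE1 : |v| ≤ E := hvE.trans (mul_le_of_le_one_right (by positivity) hx1)
  have hzv : z ^ p ≤ Real.exp v := calc
    z ^ p = (z ^ q) ^ (p / q) := by rw [← Real.rpow_mul hz, mul_div_cancel₀ p hq.ne']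
    _ ≤ Real.exp (q * l + K * x ^ 2) ^ (p / q) := by
      gcongr
      linarith [Real.add_one_le_exp (q * l + K * x ^ 2)]
    _ = Real.exp v := by rw [← Real.exp_mul, hv]; congr 1; field_simp
  calc z ^ p ≤ 1 + v + v ^ 2 * Real.exp |v| := hzv.trans (exp_le_one_add_add_sq_mul_exp_abs v)
    _ ≤ 1 + v + (E * x) ^ 2 * Real.exp E := by
      rw [← sq_abs v]
      gcongr
    _ = 1 + p * l + (p / q * K + E ^ 2 * Real.exp E) * x ^ 2 := by rw [hv]; ring

lemma exists_rpow_le_of_le {p q B K : ℝ} (hp : 0 ≤ p) (hq : 0 < q) (hB : 0 ≤ B) (hK : 0 ≤ K) :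
    ∃ C, 0 ≤ C ∧ ∀ a t z L : ℝ, 0 < a → 0 ≤ t → t ≤ a → 0 ≤ z → |L| ≤ B * a ^ (q - 1) * t →
      z ^ q ≤ a ^ q + q * L + K * (a ^ (q - 2) * t ^ 2) →
      z ^ p ≤ a ^ p + p * (a ^ (p - q) * L) + C * (a ^ (p - 2) * t ^ 2) := by
  obtain ⟨C, hC, h⟩ := exists_rpow_le_one_add hp hq hB hK
  refine ⟨C, hC, fun a t z L ha ht hta hz hL hzq => ?_⟩
  have hnorm := h (z / a) (L / a ^ q) (t / a) (by positivity) (by positivity)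
    ((div_le_one ha).2 hta)
    (by
      rw [abs_div, abs_of_pos (by positivity : 0 < a ^ q), div_le_iff₀ (by positivity)]
      refine hL.trans_eq ?_
      rw [Real.rpow_sub_one ha.ne']
      ring)
    (by
      rw [Real.div_rpow hz ha.le, div_le_iff₀ (by positivity)]
      refine hzq.trans_eq ?_
      rw [Real.rpow_sub ha, Real.rpow_two]
      field_simp)
  rw [Real.div_rpow hz ha.le, div_le_iff₀ (by positivity)] at hnorm
  refine hnorm.trans_eq ?_
  rw [Real.rpow_sub ha, Real.rpow_sub ha, Real.rpow_two]
  field_simp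

lemma rpow_le_of_ge {p q B a t z L : ℝ} (hp : 1 ≤ p) (hB : 0 ≤ B) (ha : 0 ≤ a) (hat : a ≤ t)
    (hz : 0 ≤ z) (hzat : z ≤ a + t) (hL : |L| ≤ B * a ^ (q - 1) * t) :
    z ^ p ≤ a ^ p + p * (a ^ (p - q) * L) + 4 * (1 + p * B) * (t ^ 2 * (a + t) ^ (p - 2)) := by
  have ht : 0 ≤ t := ha.trans hat
  have hlin : -(a ^ (p - q) * L) ≤ B * (a + t) ^ p := calc
    -(a ^ (p - q) * L) ≤ a ^ (p - q) * |L| := by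
      rw [← mul_neg]
      gcongr
      exact neg_le_abs L
    _ ≤ a ^ (p - q) * (B * a ^ (q - 1) * t) := by gcongr
    _ = B * (a ^ (p - q) * a ^ (q - 1)) * t := by ring
    _ ≤ B * a ^ (p - 1) * t := by
      gcongr
      simpa using Real.le_rpow_add ha (p - q) (q - 1)
    _ ≤ B * (a + t) ^ (p - 1) * (a + t) := by
      gcongr <;> linarith
    _ = B * (a + t) ^ p := by
      rw [mul_assoc, ← Real.rpow_add_one' (by positivity) (by linarith), sub_add_cancel]
  have hsum : (a + t) ^ p ≤ 4 * (t ^ 2 * (a + t) ^ (p - 2)) := calc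
    (a + t) ^ p = (a + t) ^ 2 * (a + t) ^ (p - 2) :=
      rpow_eq_sq_mul_rpow_sub_two (by positivity) (by linarith)
    _ ≤ (t + t) ^ 2 * (a + t) ^ (p - 2) := by gcongr
    _ = 4 * (t ^ 2 * (a + t) ^ (p - 2)) := by ring
  calc z ^ p ≤ (a + t) ^ p := by gcongr
    _ = (1 + p * B) * (a + t) ^ p - p * (B * (a + t) ^ p) := by ring
    _ ≤ (1 + p * B) * (4 * (t ^ 2 * (a + t) ^ (p - 2))) - p * -(a ^ (p - q) * L) := by gcongr
    _ ≤ a ^ p + p * (a ^ (p - q) * L) + 4 * (1 + p * B) * (t ^ 2 * (a + t) ^ (p - 2)) := by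
      linarith [Real.rpow_nonneg ha p]

lemma exists_rpow_le_of_rpow_le {p q B K : ℝ} (hp : 1 ≤ p) (hq : 0 < q) (hB : 0 ≤ B)
    (hK : 0 ≤ K) :
    ∃ C, 0 ≤ C ∧ ∀ a t z L : ℝ, 0 ≤ a → 0 ≤ t → 0 ≤ z → z ≤ a + t →
      |L| ≤ B * a ^ (q - 1) * t →
      z ^ q ≤ a ^ q + q * L + K * (t ^ 2 * (a + t) ^ (q - 2)) →
      z ^ p ≤ a ^ p + p * (a ^ (p - q) * L) + C * (t ^ 2 * (a + t) ^ (p - 2)) := by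
  have hp0 : 0 ≤ p := zero_le_one.trans hp
  obtain ⟨C, hC, h⟩ := exists_rpow_le_of_le (K := K * 2 ^ |q - 2|) hp0 hq hB (by positivity)
  refine ⟨max (4 * (1 + p * B)) (C * 2 ^ |p - 2|), by positivity,
    fun a t z L ha ht hz hzat hL hzq => ?_⟩
  rcases le_or_gt a t with hat | hta
  · refine (rpow_le_of_ge hp hB ha hat hz hzat hL).trans ?_
    gcongr
    exact le_max_left _ _
  · have ha : 0 < a := ht.trans_lt hta
    have hq2 : (a + t) ^ (q - 2) ≤ 2 ^ |q - 2| * a ^ (q - 2) :=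
      rpow_le_rpow_abs_mul_rpow (by positivity) ha (by linarith) (by linarith) _
    have hp2 : a ^ (p - 2) ≤ 2 ^ |p - 2| * (a + t) ^ (p - 2) :=
      rpow_le_rpow_abs_mul_rpow ha (by positivity) (by linarith) (by linarith) _
    have hzq' : z ^ q ≤ a ^ q + q * L + K * 2 ^ |q - 2| * (a ^ (q - 2) * t ^ 2) := calc
      z ^ q ≤ a ^ q + q * L + K * (t ^ 2 * (2 ^ |q - 2| * a ^ (q - 2))) := hzq.trans (by gcongr)
      _ = _ := by ring
    calc z ^ p ≤ a ^ p + p * (a ^ (p - q) * L) + C * (a ^ (p - 2) * t ^ 2) :=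
          h a t z L ha ht hta.le hz hL hzq'
      _ ≤ a ^ p + p * (a ^ (p - q) * L) + C * (2 ^ |p - 2| * (a + t) ^ (p - 2) * t ^ 2) := by
        gcongr
      _ = a ^ p + p * (a ^ (p - q) * L) + C * 2 ^ |p - 2| * (t ^ 2 * (a + t) ^ (p - 2)) := by ring
      _ ≤ _ := by gcongr; exact le_max_right _ _

end RealInequalities

section UpperBregmanBound

variable {E : Type*} [AddCommGroup E]

/-- A function `F` lies below its first-order models `F ξ + L ξ η`, up to an error of order `q`
measured by the gauge `N`. For `F = H ^ q`, `N = H` and `L ξ = dF(ξ)` this bounds the Bregman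
distance of `F` from above; the error `N η ^ 2 * (N ξ + N η) ^ (q - 2)` is quadratic in small `η`
and homogeneous of degree `q`. -/
def HasUpperBregmanBound (q : ℝ) (N F : E → ℝ) (L : E → E → ℝ) : Prop :=
  ∃ C, 0 ≤ C ∧ ∀ ξ η, F (ξ + η) ≤ F ξ + L ξ η + C * (N η ^ 2 * (N ξ + N η) ^ (q - 2))

namespace HasUpperBregmanBound

lemma exists_pos {q : ℝ} {N F : E → ℝ} {L : E → E → ℝ} (h : HasUpperBregmanBound q N F L)
    (hN : ∀ ξ, 0 ≤ N ξ) :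
    ∃ C, 0 < C ∧ ∀ ξ η, F (ξ + η) - F ξ - L ξ η ≤ C * N η ^ 2 * (N ξ + N η) ^ (q - 2) := by
  obtain ⟨C, hC, hF⟩ := h
  refine ⟨C + 1, by positivity, fun ξ η => ?_⟩
  have hξ := hN ξ
  have hη := hN η
  have herror : 0 ≤ N η ^ 2 * (N ξ + N η) ^ (q - 2) := by positivity
  linarith [hF ξ η]

lemma sum {κ : Type*} [Fintype κ] {q : ℝ} {N : E → ℝ} {F : κ → E → ℝ} {L : κ → E → E → ℝ}
    (h : ∀ k, HasUpperBregmanBound q N (F k) (L k)) :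
    HasUpperBregmanBound q N (fun ξ => ∑ k, F k ξ) (fun ξ η => ∑ k, L k ξ η) := by
  choose C hC hF using h
  refine ⟨∑ k, C k, Finset.sum_nonneg fun k _ => hC k, fun ξ η => ?_⟩
  rw [Finset.sum_mul, ← Finset.sum_add_distrib, ← Finset.sum_add_distrib]
  exact Finset.sum_le_sum fun k _ => hF k ξ η

lemma mono {q : ℝ} {N N' F : E → ℝ} {L : E → E → ℝ} (hq : 2 ≤ q) (hN : ∀ ξ, 0 ≤ N ξ)
    (hNN' : ∀ ξ, N ξ ≤ N' ξ) (h : HasUpperBregmanBound q N F L) :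
    HasUpperBregmanBound q N' F L := by
  obtain ⟨C, hC, hF⟩ := h
  refine ⟨C, hC, fun ξ η => (hF ξ η).trans ?_⟩
  have hξ := hN ξ
  have hη := hN η
  gcongr <;> exact hNN' _

lemma of_comparable {q D : ℝ} {N N' F : E → ℝ} {L : E → E → ℝ} (hN : ∀ ξ, 0 ≤ N ξ) (hD : 0 ≤ D)
    (hNN' : ∀ ξ, N ξ ≤ N' ξ) (hN'N : ∀ ξ, N' ξ ≤ D * N ξ) (h : HasUpperBregmanBound q N F L) :
    HasUpperBregmanBound q N' F L := by
  obtain ⟨C, hC, hF⟩ := h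
  refine ⟨C * D ^ |q - 2|, by positivity, fun ξ η => (hF ξ η).trans ?_⟩
  have hgauge : N η ^ 2 * (N ξ + N η) ^ (q - 2)
      ≤ D ^ |q - 2| * (N' η ^ 2 * (N' ξ + N' η) ^ (q - 2)) :=
    sq_mul_add_rpow_le_of_comparable (hN ξ) (hN η) (hNN' ξ) (hNN' η) (hN'N ξ) (hN'N η) _
  rw [mul_assoc C]
  gcongr

lemma change_exponent [Module ℝ E] {N : Seminorm ℝ E} {L : E → E → ℝ} {p q B : ℝ}
    (hp : 1 ≤ p) (hq : 0 < q) (hB : 0 ≤ B) (hL : ∀ ξ η, |L ξ η| ≤ B * N ξ ^ (q - 1) * N η)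
    (h : HasUpperBregmanBound q N (fun ξ => N ξ ^ q) (fun ξ η => q * L ξ η)) :
    HasUpperBregmanBound p N (fun ξ => N ξ ^ p) (fun ξ η => p * (N ξ ^ (p - q) * L ξ η)) := by
  obtain ⟨K, hK, hN⟩ := h
  obtain ⟨C, hC, hpow⟩ := exists_rpow_le_of_rpow_le hp hq hB hK
  exact ⟨C, hC, fun ξ η => hpow _ _ _ _ (apply_nonneg N _) (apply_nonneg N _) (apply_nonneg N _)
    (map_add_le_add N _ _) (hL ξ η) (hN ξ η)⟩

end HasUpperBregmanBound

end UpperBregmanBound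

section PolarForm

variable {E : Type*} [AddCommGroup E] [Module ℝ E]

/-- `b` is the polar form of the Hilbertian seminorm `N`: it plays the role of the inner product
in the expansion of `N (ξ + η) ^ 2`. -/
def IsPolarForm (b : E → E → ℝ) (N : Seminorm ℝ E) : Prop :=
  ∀ ξ η, N (ξ + η) ^ 2 = N ξ ^ 2 + 2 * b ξ η + N η ^ 2

namespace IsPolarForm

variable {N : Seminorm ℝ E} {b : E → E → ℝ}

lemma abs_le (h : IsPolarForm b N) (ξ η : E) : |b ξ η| ≤ N ξ * N η := by
  have hadd : N (ξ + η) ^ 2 ≤ (N ξ + N η) ^ 2 :=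
    pow_le_pow_left₀ (apply_nonneg N _) (map_add_le_add N ξ η) 2
  have hsub : (N ξ - N η) ^ 2 ≤ N (ξ + η) ^ 2 := by
    refine sq_le_sq.2 ?_
    rw [abs_of_nonneg (apply_nonneg N (ξ + η))]
    simpa using abs_sub_map_le_sub N ξ (-η)
  rw [h] at hadd hsub
  exact _root_.abs_le.2 ⟨by linarith, by linarith⟩

lemma hasUpperBregmanBound (h : IsPolarForm b N) {p : ℝ} (hp : 1 ≤ p) :
    HasUpperBregmanBound p N (fun ξ => N ξ ^ p) (fun ξ η => p * (N ξ ^ (p - 2) * b ξ η)) := by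
  refine HasUpperBregmanBound.change_exponent (B := 1) hp two_pos zero_le_one
    (fun ξ η => ?_) ⟨1, zero_le_one, fun ξ η => ?_⟩
  · norm_num
    exact h.abs_le ξ η
  · norm_num
    exact (h ξ η).le

end IsPolarForm

end PolarForm

lemma exists_seminorm_le_mul_of_definite {E : Type*} [AddCommGroup E] [Module ℝ E]
    [FiniteDimensional ℝ E] (M : Seminorm ℝ E) {N : Seminorm ℝ E} (hN : ∀ ξ, N ξ = 0 → ξ = 0) :
    ∃ D, 0 ≤ D ∧ ∀ ξ, M ξ ≤ D * N ξ := by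
  let : NormedAddCommGroup E :=
    AddGroupNorm.toNormedAddCommGroup { N with eq_zero_of_map_eq_zero' := hN }
  let : NormedSpace ℝ E := ⟨fun c ξ => (map_smul_eq_mul N c ξ).le⟩
  obtain ⟨D, hD, hMD⟩ :=
    Seminorm.bound_of_continuous_normedSpace M M.convexOn.locallyLipschitz.continuous
  exact ⟨D, hD.le, hMD⟩

section LpSeminorm

variable {E κ : Type*} [AddCommGroup E] [Module ℝ E] [Fintype κ]

/-- The `ℓᵖ`-sum of a finite family of seminorms. With the absolute values of the coordinates it
is `|·|_s`; with `|·|_s` and `|·|_A` it is `H`. -/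
noncomputable def lpSeminorm {p : ℝ} (hp : 1 ≤ p) (N : κ → Seminorm ℝ E) : Seminorm ℝ E :=
  Seminorm.of (fun ξ => (∑ k, N k ξ ^ p) ^ (1 / p))
    (fun ξ η => by
      refine le_trans ?_ (Real.Lp_add_le_of_nonneg Finset.univ hp
        (fun k _ => apply_nonneg (N k) ξ) (fun k _ => apply_nonneg (N k) η))
      gcongr with k
      exact map_add_le_add (N k) ξ η)
    (fun c ξ => by
      simp_rw [map_smul_eq_mul, Real.mul_rpow (norm_nonneg c) (apply_nonneg _ ξ)]
      rw [← Finset.mul_sum, Real.mul_rpow (by positivity) (by positivity), one_div,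
        Real.rpow_rpow_inv (norm_nonneg c) (by positivity)])

variable {p : ℝ} (hp : 1 ≤ p) (N : κ → Seminorm ℝ E)

lemma lpSeminorm_apply (ξ : E) : lpSeminorm hp N ξ = (∑ k, N k ξ ^ p) ^ (1 / p) := rfl

lemma lpSeminorm_rpow (ξ : E) : lpSeminorm hp N ξ ^ p = ∑ k, N k ξ ^ p := by
  rw [lpSeminorm_apply, one_div, Real.rpow_inv_rpow (by positivity) (by positivity)]

lemma le_lpSeminorm (k : κ) (ξ : E) : N k ξ ≤ lpSeminorm hp N ξ := by
  rw [← Real.rpow_le_rpow_iff (apply_nonneg _ _) (apply_nonneg _ _) (zero_lt_one.trans_le hp),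
    lpSeminorm_rpow]
  exact Finset.single_le_sum (f := fun k => N k ξ ^ p) (fun k _ => by positivity)
    (Finset.mem_univ k)

lemma eq_zero_of_lpSeminorm_eq_zero {ξ : E} (h : lpSeminorm hp N ξ = 0) (k : κ) : N k ξ = 0 :=
  le_antisymm ((le_lpSeminorm hp N k ξ).trans_eq h) (apply_nonneg _ _)

lemma lpSeminorm_pair_apply (M N : Seminorm ℝ E) (ξ : E) :
    lpSeminorm hp ![M, N] ξ = (M ξ ^ p + N ξ ^ p) ^ (1 / p) := by
  simp [lpSeminorm_apply]

end LpSeminorm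

section LpSeminormBregman

variable {E κ : Type*} [AddCommGroup E] [Module ℝ E] [Fintype κ]

lemma hasUpperBregmanBound_lpSeminorm_of_two_le {p : ℝ} (hp : 2 ≤ p) {N : κ → Seminorm ℝ E}
    {L : κ → E → E → ℝ} (h : ∀ k, HasUpperBregmanBound p (N k) (fun ξ => N k ξ ^ p) (L k)) :
    HasUpperBregmanBound p (lpSeminorm (one_le_two.trans hp) N)
      (fun ξ => lpSeminorm (one_le_two.trans hp) N ξ ^ p) (fun ξ η => ∑ k, L k ξ η) := by
  simp only [lpSeminorm_rpow]
  exact .sum fun k => (h k).mono hp (apply_nonneg (N k)) (le_lpSeminorm _ N k)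

lemma hasUpperBregmanBound_lpSeminorm_of_definite [FiniteDimensional ℝ E] {p : ℝ} (hp : 1 ≤ p)
    {N : κ → Seminorm ℝ E} (hN : ∀ k ξ, N k ξ = 0 → ξ = 0) {L : κ → E → E → ℝ}
    (h : ∀ k, HasUpperBregmanBound p (N k) (fun ξ => N k ξ ^ p) (L k)) :
    HasUpperBregmanBound p (lpSeminorm hp N)
      (fun ξ => lpSeminorm hp N ξ ^ p) (fun ξ η => ∑ k, L k ξ η) := by
  simp only [lpSeminorm_rpow]
  refine .sum fun k => ?_
  obtain ⟨D, hD, hle⟩ := exists_seminorm_le_mul_of_definite (lpSeminorm hp N) (hN k)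
  exact (h k).of_comparable (apply_nonneg (N k)) hD (le_lpSeminorm hp N k) hle

lemma hasUpperBregmanBound_lpSeminorm_pair [FiniteDimensional ℝ E] {p : ℝ} (hp : 1 ≤ p)
    {M N : Seminorm ℝ E} (hM0 : ∀ ξ, M ξ = 0 → ξ = 0) (hN0 : ∀ ξ, N ξ = 0 → ξ = 0)
    {L L' : E → E → ℝ} (hM : HasUpperBregmanBound p M (fun ξ => M ξ ^ p) L)
    (hN : HasUpperBregmanBound p N (fun ξ => N ξ ^ p) L') :
    HasUpperBregmanBound p (lpSeminorm hp ![M, N])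
      (fun ξ => lpSeminorm hp ![M, N] ξ ^ p) (fun ξ η => L ξ η + L' ξ η) := by
  have h := hasUpperBregmanBound_lpSeminorm_of_definite hp (N := ![M, N]) (L := ![L, L'])
    (Fin.forall_fin_two.2 ⟨hM0, hN0⟩) (Fin.forall_fin_two.2 ⟨hM, hN⟩)
  simpa only [Fin.sum_univ_two, cons_val_zero, cons_val_one] using h

lemma abs_sum_rpow_mul_polarForm_le {s : ℝ} (hs : 1 < s) {N : κ → Seminorm ℝ E}
    {b : κ → E → E → ℝ} (hb : ∀ k, IsPolarForm (b k) (N k)) (ξ η : E) :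
    |∑ k, N k ξ ^ (s - 2) * b k ξ η|
      ≤ Fintype.card κ * lpSeminorm hs.le N ξ ^ (s - 1) * lpSeminorm hs.le N η := by
  have hterm (k : κ) : |N k ξ ^ (s - 2) * b k ξ η|
      ≤ lpSeminorm hs.le N ξ ^ (s - 1) * lpSeminorm hs.le N η := calc
    |N k ξ ^ (s - 2) * b k ξ η| = N k ξ ^ (s - 2) * |b k ξ η| := by
      rw [abs_mul, abs_of_nonneg (by positivity)]
    _ ≤ N k ξ ^ (s - 2) * (N k ξ * N k η) := by gcongr; exact (hb k).abs_le ξ η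
    _ = N k ξ ^ (s - 1) * N k η := by
      rw [← mul_assoc, ← Real.rpow_add_one' (by positivity) (by linarith)]
      ring_nf
    _ ≤ _ := by
      gcongr
      · exact le_lpSeminorm hs.le N k ξ
      · exact le_lpSeminorm hs.le N k η
  calc |∑ k, N k ξ ^ (s - 2) * b k ξ η| ≤ ∑ k, |N k ξ ^ (s - 2) * b k ξ η| :=
        Finset.abs_sum_le_sum_abs _ _
    _ ≤ ∑ _k : κ, lpSeminorm hs.le N ξ ^ (s - 1) * lpSeminorm hs.le N η :=
      Finset.sum_le_sum fun k _ => hterm k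
    _ = _ := by rw [Finset.sum_const, Finset.card_univ, nsmul_eq_mul, mul_assoc]

lemma hasUpperBregmanBound_lpSeminorm_of_isPolarForm {p s : ℝ} (hp : 1 ≤ p) (hs : 2 ≤ s)
    {N : κ → Seminorm ℝ E} {b : κ → E → E → ℝ} (hb : ∀ k, IsPolarForm (b k) (N k)) :
    HasUpperBregmanBound p (lpSeminorm (one_le_two.trans hs) N)
      (fun ξ => lpSeminorm (one_le_two.trans hs) N ξ ^ p)
      (fun ξ η => p * (lpSeminorm (one_le_two.trans hs) N ξ ^ (p - s)
        * ∑ k, N k ξ ^ (s - 2) * b k ξ η)) := by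
  refine .change_exponent hp (two_pos.trans_le hs) (Nat.cast_nonneg _)
    (abs_sum_rpow_mul_polarForm_le (one_lt_two.trans_le hs) hb) ?_
  simp only [Finset.mul_sum]
  exact hasUpperBregmanBound_lpSeminorm_of_two_le hs fun k =>
    (hb k).hasUpperBregmanBound (one_le_two.trans hs)

end LpSeminormBregman

section CoordinatesAndMatrices

variable {ι : Type*}

/-- The seminorm `ξ ↦ |ξ i|`. -/
noncomputable def coordSeminorm (i : ι) : Seminorm ℝ (ι → ℝ) :=
  (normSeminorm ℝ ℝ).comp (LinearMap.proj i)

lemma coordSeminorm_apply (i : ι) (ξ : ι → ℝ) : coordSeminorm i ξ = |ξ i| := rfl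

lemma isPolarForm_coordSeminorm (i : ι) :
    IsPolarForm (fun ξ η : ι → ℝ => ξ i * η i) (coordSeminorm i) := fun ξ η => by
  simp only [coordSeminorm_apply, sq_abs, Pi.add_apply]
  ring

variable [Fintype ι]

/-- The seminorm `|ξ|_A = √⟪A ξ, ξ⟫` of a positive semidefinite matrix. -/
noncomputable def matrixSeminorm {A : Matrix ι ι ℝ} (hA : A.PosSemidef) : Seminorm ℝ (ι → ℝ) :=
  letI := A.toSeminormedAddCommGroup hA
  letI := A.toInnerProductSpace hA
  normSeminorm ℝ (ι → ℝ)

lemma matrixSeminorm_apply {A : Matrix ι ι ℝ} (hA : A.PosSemidef) (ξ : ι → ℝ) :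
    matrixSeminorm hA ξ = √(A *ᵥ ξ ⬝ᵥ ξ) := rfl

lemma isPolarForm_matrixSeminorm {A : Matrix ι ι ℝ} (hA : A.PosSemidef) :
    IsPolarForm (fun ξ η => A *ᵥ ξ ⬝ᵥ η) (matrixSeminorm hA) := fun ξ η => by
  let := A.toSeminormedAddCommGroup hA
  let := A.toInnerProductSpace hA
  have hcomm : A *ᵥ η ⬝ᵥ ξ = A *ᵥ ξ ⬝ᵥ η := real_inner_comm η ξ
  have hexpand : matrixSeminorm hA (ξ + η) ^ 2
      = matrixSeminorm hA ξ ^ 2 + 2 * (A *ᵥ η ⬝ᵥ ξ) + matrixSeminorm hA η ^ 2 :=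
    norm_add_sq_real ξ η
  rwa [hcomm] at hexpand

lemma eq_zero_of_matrixSeminorm_eq_zero {A : Matrix ι ι ℝ} (hA : A.PosDef) {ξ : ι → ℝ}
    (h : matrixSeminorm hA.posSemidef ξ = 0) : ξ = 0 := by
  by_contra hξ
  have hpos := hA.dotProduct_mulVec_pos hξ
  rw [matrixSeminorm_apply, Real.sqrt_eq_zero', dotProduct_comm] at h
  exact h.not_gt hpos

end CoordinatesAndMatrices

theorem stmt_9_general {ι : Type*} [Fintype ι] {p s : ℝ} (hp : 1 ≤ p) (hs : 2 ≤ s)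
    {A : Matrix ι ι ℝ} (hA : A.PosDef) (ns na Hn : (ι → ℝ) → ℝ)
    (hns : ∀ ζ, ns ζ = (∑ i, |ζ i| ^ s) ^ (1 / s))
    (hna : ∀ ζ, na ζ = Real.sqrt (A.mulVec ζ ⬝ᵥ ζ))
    (hHn : ∀ ζ, Hn ζ = (ns ζ ^ p + na ζ ^ p) ^ (1 / p)) :
    (∀ ξ, 0 ≤ Hn ξ) ∧
    (∀ ξ, Hn ξ = 0 ↔ ξ = 0) ∧
    (∀ (c : ℝ) (ξ : ι → ℝ), Hn (c • ξ) = |c| * Hn ξ) ∧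
    (∀ ξ η, Hn (ξ + η) ≤ Hn ξ + Hn η) ∧
    ∃ C : ℝ, 0 < C ∧ ∀ ξ η : ι → ℝ, ¬(ξ = 0 ∧ η = 0) →
      Hn (ξ + η) ^ p - Hn ξ ^ p
          - (if ξ = 0 then 0 else
              p * ns ξ ^ (p - s) * ∑ i, |ξ i| ^ (s - 2) * ξ i * η i)
          - (if ξ = 0 then 0 else p * na ξ ^ (p - 2) * (A.mulVec ξ ⬝ᵥ η))
        ≤ C * Hn η ^ 2 * (Hn ξ + Hn η) ^ (p - 2) := by
  obtain rfl : ns = lpSeminorm (one_le_two.trans hs) coordSeminorm := funext hns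
  obtain rfl : na = matrixSeminorm hA.posSemidef := funext hna
  set S := lpSeminorm (one_le_two.trans hs) (coordSeminorm (ι := ι))
  set Q := matrixSeminorm hA.posSemidef
  obtain rfl : Hn = lpSeminorm hp ![S, Q] := funext fun ζ => by rw [hHn, lpSeminorm_pair_apply]
  have hS (ξ) (h : S ξ = 0) : ξ = 0 :=
    funext fun i => abs_eq_zero.1 (eq_zero_of_lpSeminorm_eq_zero _ coordSeminorm h i)
  have hQ (ξ) (h : Q ξ = 0) : ξ = 0 := eq_zero_of_matrixSeminorm_eq_zero hA h
  have hbound := hasUpperBregmanBound_lpSeminorm_pair hp hS hQ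
    (hasUpperBregmanBound_lpSeminorm_of_isPolarForm hp hs isPolarForm_coordSeminorm)
    ((isPolarForm_matrixSeminorm hA.posSemidef).hasUpperBregmanBound hp)
  obtain ⟨C, hC, hle⟩ := hbound.exists_pos (apply_nonneg _)
  refine ⟨apply_nonneg _, fun ξ => ⟨fun h => hS ξ (eq_zero_of_lpSeminorm_eq_zero hp _ h 0), ?_⟩,
    map_smul_eq_mul _, map_add_le_add _, C, hC, fun ξ η _ => (hle ξ η).trans_eq' ?_⟩
  · rintro rfl
    exact map_zero _
  · rw [ite_eq_right_iff.2 fun hξ => by simp [hξ], ite_eq_right_iff.2 fun hξ => by simp [hξ]]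
    simp only [coordSeminorm_apply, sub_sub, add_assoc, mul_assoc, S, Q]

/-- `H(ξ) := (|ξ|_s^p + |ξ|_A^p)^{1/p}` is a norm on `ℝⁿ`
satisfying the upper Bregman-distance estimate of Assumption `assup`. -/
theorem stmt_9 (n : ℕ) (hn : 2 ≤ n) (p s : ℝ) (hp : 1 < p) (hs : 2 ≤ s)
    (A : Matrix (Fin n) (Fin n) ℝ) (hAsymm : A.IsSymm) (hApos : A.PosDef)
    (ns na Hn : (Fin n → ℝ) → ℝ)
    (hns : ∀ ζ, ns ζ = (∑ i, |ζ i| ^ s) ^ (1 / s))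
    (hna : ∀ ζ, na ζ = Real.sqrt (A.mulVec ζ ⬝ᵥ ζ))
    (hHn : ∀ ζ, Hn ζ = (ns ζ ^ p + na ζ ^ p) ^ (1 / p)) :
    (∀ ξ, 0 ≤ Hn ξ) ∧
    (∀ ξ, Hn ξ = 0 ↔ ξ = 0) ∧
    (∀ (c : ℝ) (ξ : Fin n → ℝ), Hn (c • ξ) = |c| * Hn ξ) ∧
    (∀ ξ η, Hn (ξ + η) ≤ Hn ξ + Hn η) ∧
    ∃ C : ℝ, 0 < C ∧ ∀ ξ η : Fin n → ℝ, ¬(ξ = 0 ∧ η = 0) →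
      Hn (ξ + η) ^ p - Hn ξ ^ p
          - (if ξ = 0 then 0 else
              p * ns ξ ^ (p - s) * ∑ i, |ξ i| ^ (s - 2) * ξ i * η i)
          - (if ξ = 0 then 0 else p * na ξ ^ (p - 2) * (A.mulVec ξ ⬝ᵥ η))
        ≤ C * Hn η ^ 2 * (Hn ξ + Hn η) ^ (p - 2) :=
  stmt_9_general hp.le hs hApos ns na Hn hns hna hHn
end

section
/- Let 1 < p < ∞ with p ≠ n. Let H be a norm on ℝⁿ differentiable on ℝⁿ\{0}, let H₀(x) := sup_{ξ ≠ 0} ⟪x, ξ⟫ / H(ξ) denote its dual norm, and assume H₀ is differentiable on ℝⁿ\{0}. Define G(x) := H₀(x)^{(p−n)/(p−1)} for x ≠ 0 and A(ξ) := ∇(H^p/p)(ξ) for ξ ≠ 0. Then G is weakly Finsler p-harmonic in ℝⁿ\{0}: for every smooth function φ : ℝⁿ → ℝ whose support is a compact subset of ℝⁿ\{0}, ∫_{ℝⁿ} ⟪A(∇G(x)), ∇φ(x)⟫ dx = 0. -/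
open MeasureTheory RealInnerProductSpace

/-!
Put `α = (p - n) / (p - 1)`. Duality of `H` and `H₀` says that `∇H₀ x` is the `H`-unit vector
maximizing `⟪x, ·⟫`, and that `A (∇H₀ x) = (H₀ x)⁻¹ • x`. Since `∇G` is a multiple of `∇H₀` and `A`
is homogeneous of degree `p - 1`, it follows that `A (∇G x) = c • (H₀ x ^ n)⁻¹ • x` for a constant
`c`. This radial field is homogeneous of degree `1 - n`, so in polar coordinates the Jacobian
`r ^ (n - 1)` cancels its decay: on every ray the integrand becomes a constant multiple of the
derivative of `r ↦ φ (r • θ)`, which integrates to `-φ 0 = 0`.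
-/

section Gradient

variable {E : Type*} [NormedAddCommGroup E] [InnerProductSpace ℝ E] [CompleteSpace E]
  {f : E → ℝ} {x : E}

theorem gradient_eq_of_forall_inner_le {v : E} (hf : DifferentiableAt ℝ f x)
    (hle : ∀ y, ⟪v, y⟫ ≤ f y) (heq : ⟪v, x⟫ = f x) : gradient f x = v := by
  have hmin : IsLocalMin (fun y => f y - ⟪v, y⟫) x :=
    Filter.Eventually.of_forall fun y => by
      simpa only [heq, sub_self, sub_nonneg] using hle y
  have hderiv : HasFDerivAt (fun y => f y - ⟪v, y⟫) (fderiv ℝ f x - innerSL ℝ v) x :=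
    hf.hasFDerivAt.sub (innerSL ℝ v).hasFDerivAt
  rw [gradient, sub_eq_zero.mp (hmin.hasFDerivAt_eq_zero hderiv)]
  exact (InnerProductSpace.toDual ℝ E).symm_apply_apply v

theorem gradient_rpow_const (hf : DifferentiableAt ℝ f x) (hx : f x ≠ 0) (a : ℝ) :
    gradient (fun y => f y ^ a) x = (a * f x ^ (a - 1)) • gradient f x := by
  rw [gradient, (hf.hasFDerivAt.rpow_const (Or.inl hx)).fderiv, map_smulₛₗ, gradient]
  rfl

theorem gradient_const_mul (hf : DifferentiableAt ℝ f x) (c : ℝ) :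
    gradient (fun y => c * f y) x = c • gradient f x := by
  rw [gradient, fderiv_const_mul hf, map_smulₛₗ, gradient]
  rfl

theorem smul_gradient_smul_of_forall_eq_mul {b c : ℝ} (hf : ∀ y, f (c • y) = b * f y) (x : E) :
    c • gradient f (c • x) = b • gradient f x := by
  have hfderiv : c • fderiv ℝ f (c • x) = b • fderiv ℝ f x :=
    calc c • fderiv ℝ f (c • x) = fderiv ℝ (fun y => f (c • y)) x := (fderiv_comp_smul c).symm
      _ = fderiv ℝ (b • f) x := congrArg (fderiv ℝ · x) (funext hf)
      _ = b • fderiv ℝ f x := congrFun (fderiv_const_smul_field b) x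
  simpa [gradient] using congrArg (InnerProductSpace.toDual ℝ E).symm hfderiv

end Gradient

section Radial

variable {E F : Type*} [NormedAddCommGroup E] [NormedSpace ℝ E] [NormedAddCommGroup F]
  [NormedSpace ℝ F]

theorem integrable_smul_of_locallyIntegrableOn_of_tsupport_subset {X : Type*} [TopologicalSpace X]
    [T2Space X] [MeasurableSpace X] [OpensMeasurableSpace X] [SecondCountableTopologyEither X F]
    {ν : Measure X} {w : X → ℝ} {g : X → F} {s : Set X} (hw : LocallyIntegrableOn w s ν)
    (hg : Continuous g) (hc : HasCompactSupport g) (hs : tsupport g ⊆ s) :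
    Integrable (fun x => w x • g x) ν := by
  refine (integrableOn_iff_integrable_of_support_subset fun x hx => ?_).mp
    ((hw.integrableOn_compact_subset hs hc).smul_continuousOn hg.continuousOn hc)
  exact subset_tsupport g (right_ne_zero_of_smul hx)

theorem integral_Ioi_fderiv_smul_eq_neg [CompleteSpace F] {φ : E → F} (hφ : ContDiff ℝ 1 φ)
    (hc : HasCompactSupport φ) {θ : E} (hθ : θ ≠ 0) :
    ∫ r in Set.Ioi (0 : ℝ), fderiv ℝ φ (r • θ) θ = -φ 0 := by
  have hderiv (r : ℝ) : deriv (fun s : ℝ => φ (s • θ)) r = fderiv ℝ φ (r • θ) θ := by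
    have hray : HasDerivAt (fun s : ℝ => s • θ) θ r := by
      simpa using (hasDerivAt_id r).smul_const θ
    exact ((hφ.differentiable one_ne_zero (r • θ)).hasFDerivAt.comp_hasDerivAt r hray).deriv
  have hcray : HasCompactSupport fun s : ℝ => φ (s • θ) :=
    hc.comp_isClosedEmbedding (isClosedEmbedding_smul_left hθ)
  simpa [hderiv] using hcray.integral_Ioi_deriv_eq (by fun_prop) 0

variable [FiniteDimensional ℝ E] [MeasurableSpace E] [BorelSpace E] (μ : Measure E)
  [μ.IsAddHaarMeasure]

theorem integral_volumeIoiPow (n : ℕ) (f : ℝ → F) :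
    ∫ r : Set.Ioi (0 : ℝ), f r ∂Measure.volumeIoiPow n = ∫ r in Set.Ioi (0 : ℝ), r ^ n • f r := by
  simp only [Measure.volumeIoiPow, ENNReal.ofReal]
  rw [integral_withDensity_eq_integral_smul (by fun_prop),
    integral_subtype_comap measurableSet_Ioi fun r => Real.toNNReal (r ^ n) • f r]
  refine setIntegral_congr_fun measurableSet_Ioi fun r (hr : 0 < r) => ?_
  rw [NNReal.smul_def, Real.coe_toNNReal _ (by positivity)]

theorem integral_eq_integral_toSphere_integral_Ioi [Nontrivial E] {f : E → F}
    (hf : Integrable f μ) :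
    ∫ x, f x ∂μ = ∫ θ, (∫ r in Set.Ioi (0 : ℝ), r ^ (Module.finrank ℝ E - 1) • f (r • (θ : E)))
      ∂μ.toSphere := by
  set e := homeomorphUnitSphereProd E
  have hpres : MeasurePreserving e.symm
      (μ.toSphere.prod (Measure.volumeIoiPow (Module.finrank ℝ E - 1))) (μ.comap (↑)) :=
    μ.measurePreserving_homeomorphUnitSphereProd.symm e.toMeasurableEquiv
  have hemb : MeasurableEmbedding e.symm := e.symm.measurableEmbedding
  have hint : Integrable (fun q => f (e.symm q))
      (μ.toSphere.prod (Measure.volumeIoiPow (Module.finrank ℝ E - 1))) := by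
    refine (hpres.integrable_comp_emb hemb (g := fun x => f x)).mpr ?_
    exact (integrableOn_iff_comap_subtypeVal (measurableSet_singleton 0).compl).mp hf.integrableOn
  calc ∫ x, f x ∂μ = ∫ x : ({0}ᶜ : Set E), f x ∂μ.comap (↑) := by
        rw [integral_subtype_comap (measurableSet_singleton 0).compl, restrict_compl_singleton]
    _ = ∫ q, f (e.symm q) ∂μ.toSphere.prod (Measure.volumeIoiPow (Module.finrank ℝ E - 1)) :=
        (hpres.integral_comp hemb fun x => f x).symm
    _ = _ := by
        rw [integral_prod _ hint]
        refine integral_congr_ae (.of_forall fun θ => ?_)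
        exact integral_volumeIoiPow _ fun r => f (r • (θ : E))

theorem integral_smul_fderiv_self_eq_zero_of_homogeneous [CompleteSpace F] {w : E → ℝ} {φ : E → F}
    (hw : LocallyIntegrableOn w {0}ᶜ μ)
    (hhom : ∀ r : ℝ, 0 < r → ∀ x, x ≠ 0 → w (r • x) = (r ^ Module.finrank ℝ E)⁻¹ * w x)
    (hφ : ContDiff ℝ 1 φ) (hc : HasCompactSupport φ) (hs : tsupport φ ⊆ {0}ᶜ) :
    ∫ x, w x • fderiv ℝ φ x x ∂μ = 0 := by
  rcases subsingleton_or_nontrivial E with _ | _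
  · simp [Subsingleton.elim _ (0 : E)]
  have hsupp : tsupport (fun x => fderiv ℝ φ x x) ⊆ tsupport φ :=
    closure_minimal (fun x hx => tsupport_fderiv_subset ℝ <| subset_tsupport _ fun h => hx <| by
      simp [h]) (isClosed_tsupport φ)
  have hint : Integrable (fun x => w x • fderiv ℝ φ x x) μ :=
    integrable_smul_of_locallyIntegrableOn_of_tsupport_subset hw (by fun_prop)
      (hc.of_isClosed_subset (isClosed_tsupport _) hsupp) (hsupp.trans hs)
  have hφ0 : φ 0 = 0 := image_eq_zero_of_notMem_tsupport fun h => hs h rfl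
  have hray (θ : Metric.sphere (0 : E) 1) {r : ℝ} (hr : 0 < r) :
      r ^ (Module.finrank ℝ E - 1) • w (r • (θ : E)) • fderiv ℝ φ (r • (θ : E)) (r • (θ : E)) =
        w θ • fderiv ℝ φ (r • (θ : E)) θ := by
    rw [hhom r hr θ (ne_zero_of_mem_unit_sphere θ), map_smul, smul_smul, smul_smul]
    congr 1
    rw [← pow_sub_one_mul Module.finrank_pos.ne' r]
    field_simp
  have hzero (θ : Metric.sphere (0 : E) 1) :
      ∫ r in Set.Ioi (0 : ℝ), r ^ (Module.finrank ℝ E - 1) •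
        w (r • (θ : E)) • fderiv ℝ φ (r • (θ : E)) (r • (θ : E)) = 0 := by
    rw [setIntegral_congr_fun measurableSet_Ioi fun r hr => hray θ hr, integral_smul,
      integral_Ioi_fderiv_smul_eq_neg hφ hc (ne_zero_of_mem_unit_sphere θ), hφ0, neg_zero,
      smul_zero]
  simp only [integral_eq_integral_toSphere_integral_Ioi μ hint, hzero, integral_zero]

end Radial

section DualGauge

variable {E : Type*} [NormedAddCommGroup E] [InnerProductSpace ℝ E]

/-- A positive definite, absolutely homogeneous function, that is, the gauge of a symmetric star
body. Norms are the convex symmetric gauges. -/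
structure IsSymmetricGauge (H : E → ℝ) : Prop where
  pos : ∀ ξ, ξ ≠ 0 → 0 < H ξ
  map_smul : ∀ (c : ℝ) (ξ : E), H (c • ξ) = |c| * H ξ

/-- The dual norm `H₀` of `H`. For unbounded quotients the real supremum takes the junk value `0`;
this cannot occur for a continuous gauge on a finite-dimensional space. -/
noncomputable def dualGauge (H : E → ℝ) (x : E) : ℝ :=
  ⨆ ξ : {ζ : E // ζ ≠ 0}, ⟪x, (ξ : E)⟫ / H ξ

/-- The vector field `A = ∇(H ^ p / p)` of the Finsler `p`-Laplacian `u ↦ div (A (∇u))`. -/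
noncomputable def finslerFlux [CompleteSpace E] (H : E → ℝ) (p : ℝ) (ξ : E) : E :=
  gradient (fun ζ => H ζ ^ p / p) ξ

theorem dualGauge_smul_of_nonneg (H : E → ℝ) {c : ℝ} (hc : 0 ≤ c) (x : E) :
    dualGauge H (c • x) = c * dualGauge H x := by
  simp only [dualGauge, real_inner_smul_left, mul_div_assoc, Real.mul_iSup_of_nonneg hc]

namespace IsSymmetricGauge

variable {H : E → ℝ} {x : E}

theorem map_zero (hH : IsSymmetricGauge H) : H 0 = 0 := by
  simpa using hH.map_smul 0 0

theorem nonneg (hH : IsSymmetricGauge H) (ξ : E) : 0 ≤ H ξ := by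
  rcases eq_or_ne ξ 0 with rfl | hξ
  · exact hH.map_zero.ge
  · exact (hH.pos ξ hξ).le

theorem ne_zero_of_eq_one (hH : IsSymmetricGauge H) {ξ : E} (hξ : H ξ = 1) : ξ ≠ 0 := by
  rintro rfl
  exact zero_ne_one (hH.map_zero.symm.trans hξ)

theorem finslerFlux_smul [CompleteSpace E] (hH : IsSymmetricGauge H) (p : ℝ) {c : ℝ} (hc : c ≠ 0)
    (ξ : E) : finslerFlux H p (c • ξ) = (|c| ^ p / c) • finslerFlux H p ξ := by
  have hscale : c • finslerFlux H p (c • ξ) = |c| ^ p • finslerFlux H p ξ :=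
    smul_gradient_smul_of_forall_eq_mul (fun ζ => by
      rw [hH.map_smul, Real.mul_rpow (abs_nonneg c) (hH.nonneg ζ), mul_div_assoc]) ξ
  rw [div_eq_inv_mul, ← smul_smul, ← hscale, inv_smul_smul₀ hc]

theorem finslerFlux_eq_smul_gradient [CompleteSpace E] (hH : IsSymmetricGauge H) {p : ℝ}
    (hp : p ≠ 0) {ξ : E} (hξ : ξ ≠ 0) (hdiff : DifferentiableAt ℝ H ξ) :
    finslerFlux H p ξ = H ξ ^ (p - 1) • gradient H ξ := by
  have hHξ : H ξ ≠ 0 := (hH.pos ξ hξ).ne'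
  simp only [finslerFlux, div_eq_inv_mul]
  rw [gradient_const_mul (hdiff.rpow_const (Or.inl hHξ)), gradient_rpow_const hdiff hHξ, smul_smul,
    inv_mul_cancel_left₀ hp]

section Duality

variable [FiniteDimensional ℝ E] (hH : IsSymmetricGauge H) (hcont : ContinuousOn H {0}ᶜ)
include hH hcont

theorem exists_forall_inner_div_le [Nontrivial E] (x : E) :
    ∃ ξ, ξ ≠ 0 ∧ ∀ η, η ≠ 0 → ⟪x, η⟫ / H η ≤ ⟪x, ξ⟫ / H ξ := by
  have hne : ∀ ξ ∈ Metric.sphere (0 : E) 1, ξ ≠ 0 := fun ξ hξ => ne_zero_of_mem_unit_sphere ⟨ξ, hξ⟩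
  have hquot : ContinuousOn (fun ξ => ⟪x, ξ⟫ / H ξ) (Metric.sphere (0 : E) 1) :=
    .div (by fun_prop) (hcont.mono hne) fun ξ hξ => (hH.pos ξ (hne ξ hξ)).ne'
  obtain ⟨ξ, hξ, hmax⟩ := (isCompact_sphere (0 : E) 1).exists_isMaxOn
    (NormedSpace.sphere_nonempty.mpr zero_le_one) hquot
  refine ⟨ξ, hne ξ hξ, fun η hη => ?_⟩
  have hη' : 0 < ‖η‖⁻¹ := inv_pos.mpr (norm_pos_iff.mpr hη)
  calc ⟪x, η⟫ / H η = ⟪x, ‖η‖⁻¹ • η⟫ / H (‖η‖⁻¹ • η) := by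
        rw [hH.map_smul, inner_smul_right, abs_of_pos hη', mul_div_mul_left _ _ hη'.ne']
    _ ≤ ⟪x, ξ⟫ / H ξ := hmax (by simp [norm_smul, hη])

theorem bddAbove_range_inner_div (x : E) :
    BddAbove (Set.range fun ξ : {ζ : E // ζ ≠ 0} => ⟪x, (ξ : E)⟫ / H ξ) := by
  rcases subsingleton_or_nontrivial E with _ | _
  · exact ⟨0, Set.forall_mem_range.mpr fun ξ => absurd (Subsingleton.elim _ _) ξ.2⟩
  · obtain ⟨ξ, -, hmax⟩ := hH.exists_forall_inner_div_le hcont x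
    exact ⟨_, Set.forall_mem_range.mpr fun η => hmax η η.2⟩

theorem inner_le_dualGauge_mul (x η : E) : ⟪x, η⟫ ≤ dualGauge H x * H η := by
  rcases eq_or_ne η 0 with rfl | hη
  · simp [hH.map_zero]
  · rw [← div_le_iff₀ (hH.pos η hη)]
    exact le_ciSup (hH.bddAbove_range_inner_div hcont x) ⟨η, hη⟩

theorem exists_eq_one_inner_eq_dualGauge [Nontrivial E] (x : E) :
    ∃ ξ, H ξ = 1 ∧ ⟪x, ξ⟫ = dualGauge H x := by
  obtain ⟨ξ, hξ, hmax⟩ := hH.exists_forall_inner_div_le hcont x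
  have hHξ := hH.pos ξ hξ
  have : Nonempty {ζ : E // ζ ≠ 0} := ⟨⟨ξ, hξ⟩⟩
  have hval : dualGauge H x = ⟪x, ξ⟫ / H ξ :=
    le_antisymm (ciSup_le fun η => hmax η η.2)
      (le_ciSup (hH.bddAbove_range_inner_div hcont x) ⟨ξ, hξ⟩)
  refine ⟨(H ξ)⁻¹ • ξ, ?_, ?_⟩
  · rw [hH.map_smul, abs_of_pos (inv_pos.mpr hHξ), inv_mul_cancel₀ hHξ.ne']
  · rw [inner_smul_right, hval, div_eq_inv_mul]

theorem dualGauge_pos (hx : x ≠ 0) : 0 < dualGauge H x :=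
  pos_of_mul_pos_left ((real_inner_self_pos.mpr hx).trans_le (hH.inner_le_dualGauge_mul hcont x x))
    (hH.nonneg x)

theorem gradient_dualGauge_eq (hdiff : DifferentiableAt ℝ (dualGauge H) x) {ξ : E} (hξ : H ξ = 1)
    (hξx : ⟪x, ξ⟫ = dualGauge H x) : gradient (dualGauge H) x = ξ :=
  gradient_eq_of_forall_inner_le hdiff
    (fun y => by simpa [hξ, real_inner_comm] using hH.inner_le_dualGauge_mul hcont y ξ)
    ((real_inner_comm _ _).trans hξx)

theorem gradient_eq_inv_dualGauge_smul (hx : x ≠ 0) {ξ : E} (hdiff : DifferentiableAt ℝ H ξ)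
    (hξ : H ξ = 1) (hξx : ⟪x, ξ⟫ = dualGauge H x) : gradient H ξ = (dualGauge H x)⁻¹ • x := by
  have hpos := hH.dualGauge_pos hcont hx
  refine gradient_eq_of_forall_inner_le hdiff (fun η => ?_) ?_
  · rw [real_inner_smul_left, inv_mul_le_iff₀ hpos]
    exact hH.inner_le_dualGauge_mul hcont x η
  · rw [real_inner_smul_left, hξx, hξ, inv_mul_cancel₀ hpos.ne']

theorem integral_inv_dualGauge_pow_smul_fderiv_self_eq_zero {F : Type*} [NormedAddCommGroup F]
    [NormedSpace ℝ F] [CompleteSpace F] [MeasurableSpace E] [BorelSpace E] (μ : Measure E)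
    [μ.IsAddHaarMeasure] (hdual : ContinuousOn (dualGauge H) {0}ᶜ) {φ : E → F}
    (hφ : ContDiff ℝ 1 φ) (hc : HasCompactSupport φ) (hs : tsupport φ ⊆ {0}ᶜ) :
    ∫ x, (dualGauge H x ^ Module.finrank ℝ E)⁻¹ • fderiv ℝ φ x x ∂μ = 0 := by
  have hweight : ContinuousOn (fun x => (dualGauge H x ^ Module.finrank ℝ E)⁻¹) {0}ᶜ :=
    (hdual.pow _).inv₀ fun x hx => (pow_pos (hH.dualGauge_pos hcont hx) _).ne'
  refine integral_smul_fderiv_self_eq_zero_of_homogeneous μ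
    (hweight.locallyIntegrableOn (measurableSet_singleton 0).compl) (fun r hr x _ => ?_) hφ hc hs
  rw [dualGauge_smul_of_nonneg H hr.le, mul_pow, mul_inv]

end Duality

section Flux

variable [FiniteDimensional ℝ E] (hH : IsSymmetricGauge H)
  (hdiff : ∀ ξ, ξ ≠ 0 → DifferentiableAt ℝ H ξ)
include hH hdiff

theorem finslerFlux_gradient_dualGauge {p : ℝ} (hp : p ≠ 0) (hx : x ≠ 0)
    (hdual : DifferentiableAt ℝ (dualGauge H) x) :
    finslerFlux H p (gradient (dualGauge H) x) = (dualGauge H x)⁻¹ • x := by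
  have hcont : ContinuousOn H {0}ᶜ :=
    continuousOn_of_forall_continuousAt fun ξ hξ => (hdiff ξ hξ).continuousAt
  have : Nontrivial E := ⟨x, 0, hx⟩
  obtain ⟨ξ, hξ, hξx⟩ := hH.exists_eq_one_inner_eq_dualGauge hcont x
  have hξ0 := hH.ne_zero_of_eq_one hξ
  rw [hH.gradient_dualGauge_eq hcont hdual hξ hξx,
    hH.finslerFlux_eq_smul_gradient hp hξ0 (hdiff ξ hξ0), hξ, Real.one_rpow, one_smul,
    hH.gradient_eq_inv_dualGauge_smul hcont hx (hdiff ξ hξ0) hξ hξx]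

theorem finslerFlux_gradient_dualGauge_rpow {p α : ℝ} (hp : p ≠ 0) (hα : α ≠ 0) (hx : x ≠ 0)
    (hdual : DifferentiableAt ℝ (dualGauge H) x) :
    finslerFlux H p (gradient (fun y => dualGauge H y ^ α) x) =
      (|α| ^ p / α * dualGauge H x ^ ((α - 1) * (p - 1) - 1)) • x := by
  have hpos : 0 < dualGauge H x :=
    hH.dualGauge_pos (continuousOn_of_forall_continuousAt fun ξ hξ => (hdiff ξ hξ).continuousAt) hx
  set t := dualGauge H x
  have hr : 0 < t ^ (α - 1) := Real.rpow_pos_of_pos hpos _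
  have hexp : t ^ ((α - 1) * (p - 1) - 1) = (t ^ (α - 1)) ^ p / t ^ (α - 1) * t⁻¹ := by
    rw [Real.rpow_sub_one hpos.ne', Real.rpow_mul hpos.le, Real.rpow_sub_one hr.ne', div_eq_mul_inv]
  rw [gradient_rpow_const hdual hpos.ne', hH.finslerFlux_smul p (mul_ne_zero hα hr.ne'),
    hH.finslerFlux_gradient_dualGauge hdiff hp hx hdual, smul_smul, hexp, abs_mul, abs_of_pos hr,
    Real.mul_rpow (abs_nonneg α) hr.le, mul_div_mul_comm, mul_assoc]

end Flux

end IsSymmetricGauge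

theorem stmt_13_general [FiniteDimensional ℝ E] [MeasurableSpace E] [BorelSpace E] (μ : Measure E)
    [μ.IsAddHaarMeasure] {p : ℝ} (hp0 : p ≠ 0) (hp1 : p ≠ 1) (hpn : p ≠ Module.finrank ℝ E)
    {H : E → ℝ} (hH : IsSymmetricGauge H) (hdiff : ∀ ξ, ξ ≠ 0 → DifferentiableAt ℝ H ξ)
    (hdual : ∀ x, x ≠ 0 → DifferentiableAt ℝ (dualGauge H) x) {φ : E → ℝ} (hφ : ContDiff ℝ 1 φ)
    (hc : HasCompactSupport φ) (hs : tsupport φ ⊆ {0}ᶜ) :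
    ∫ x, ⟪finslerFlux H p (gradient
      (fun y => dualGauge H y ^ ((p - Module.finrank ℝ E) / (p - 1))) x), gradient φ x⟫ ∂μ = 0 := by
  set α : ℝ := (p - Module.finrank ℝ E) / (p - 1) with hα
  have hp1' : p - 1 ≠ 0 := sub_ne_zero.mpr hp1
  have hα0 : α ≠ 0 := div_ne_zero (sub_ne_zero.mpr hpn) hp1'
  have hexp : (α - 1) * (p - 1) - 1 = -Module.finrank ℝ E := by
    rw [hα]
    field_simp
    ring
  have hφ0 : fderiv ℝ φ 0 = 0 :=
    image_eq_zero_of_notMem_tsupport fun h => hs (tsupport_fderiv_subset ℝ h) rfl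
  have hradial (x : E) : ⟪finslerFlux H p (gradient (fun y => dualGauge H y ^ α) x), gradient φ x⟫ =
      |α| ^ p / α * ((dualGauge H x ^ Module.finrank ℝ E)⁻¹ • fderiv ℝ φ x x) := by
    rcases eq_or_ne x 0 with rfl | hx
    · simp [inner_gradient_right, hφ0]
    · rw [hH.finslerFlux_gradient_dualGauge_rpow hdiff hp0 hα0 hx (hdual x hx), hexp,
        Real.rpow_neg_natCast, zpow_neg, zpow_natCast, inner_gradient_right, conj_trivial, map_smul,
        mul_smul, smul_eq_mul]
  have hcont : ContinuousOn H {0}ᶜ :=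
    continuousOn_of_forall_continuousAt fun ξ hξ => (hdiff ξ hξ).continuousAt
  have hdualcont : ContinuousOn (dualGauge H) {0}ᶜ :=
    continuousOn_of_forall_continuousAt fun x hx => (hdual x hx).continuousAt
  simp only [hradial, integral_const_mul]
  rw [hH.integral_inv_dualGauge_pow_smul_fderiv_self_eq_zero hcont μ hdualcont hφ hc hs, mul_zero]

end DualGauge

/-- `G(x) := H₀(x)^{(p−n)/(p−1)}` is weakly Finsler
`p`-harmonic in `ℝⁿ \ {0}`. -/
theorem stmt_13 (n : ℕ) (hn : 2 ≤ n) (p : ℝ) (hp : 1 < p) (hpn : p ≠ n)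
    (H : EuclideanSpace ℝ (Fin n) → ℝ)
    (Hnonneg : ∀ ξ, 0 ≤ H ξ)
    (Heq_zero : ∀ ξ, H ξ = 0 ↔ ξ = 0)
    (Hhom : ∀ (c : ℝ) (ξ : EuclideanSpace ℝ (Fin n)), H (c • ξ) = |c| * H ξ)
    (Htri : ∀ ξ η, H (ξ + η) ≤ H ξ + H η)
    (Hdiff : ∀ ξ : EuclideanSpace ℝ (Fin n), ξ ≠ 0 → DifferentiableAt ℝ H ξ)
    -- the dual norm `H₀` and the function `G`:
    (H₀ : EuclideanSpace ℝ (Fin n) → ℝ)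
    (hH₀ : ∀ x, H₀ x = ⨆ ξ : {ζ : EuclideanSpace ℝ (Fin n) // ζ ≠ 0}, ⟪x, (ξ : EuclideanSpace ℝ (Fin n))⟫ / H ξ)
    (hH₀diff : ∀ x : EuclideanSpace ℝ (Fin n), x ≠ 0 → DifferentiableAt ℝ H₀ x)
    (G : EuclideanSpace ℝ (Fin n) → ℝ)
    (hG : ∀ x, G x = H₀ x ^ ((p - n) / (p - 1))) :
    ∀ φ : EuclideanSpace ℝ (Fin n) → ℝ,
      ContDiff ℝ (⊤ : ℕ∞) φ → HasCompactSupport φ →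
      tsupport φ ⊆ {(0 : EuclideanSpace ℝ (Fin n))}ᶜ →
      ∫ x, ⟪gradient (fun ζ => H ζ ^ p / p) (gradient G x), gradient φ x⟫ = 0 := by
  intro φ hφ hc hs
  obtain rfl : H₀ = dualGauge H := funext hH₀
  obtain rfl : G = fun x => dualGauge H x ^ ((p - n) / (p - 1)) := funext hG
  have hH : IsSymmetricGauge H :=
    ⟨fun ξ hξ => (Hnonneg ξ).lt_of_ne fun h => hξ ((Heq_zero ξ).mp h.symm), Hhom⟩
  have hφ1 : ContDiff ℝ 1 φ := hφ.of_le (by exact_mod_cast le_top)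
  simpa [finslerFlux] using
    stmt_13_general volume (by linarith) hp.ne' (by simpa using hpn) hH Hdiff hH₀diff hφ1 hc hs
end
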